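/- The number of three-card hands of the SET deck whose symbol is (1, {0, 1, 2}) — i.e., exactly one attribute is common to all three cards, and the three pair-counts are 0, 1, and 2 — is exactly 7776. -/

import Mathlib

/-- A card of the SET deck: four attributes, each with three values. -/
abbrev Card := Fin 4 → Fin 3

/-- The number of attributes common to all three cards. -/
def tCount (x y z : Card) : ℕ :=
  (Finset.univ.filter fun a : Fin 4 => x a = y a ∧ y a = z a).card

/-- The pair-count of the pair `(x, y)` within the triple `{x, y, z}`: the number of
attributes at which `x` and `y` agree but not all three cards agree. -/
def pairCount (x y z : Card) : ℕ :=
  (Finset.univ.filter fun a : Fin 4 => x a = y a ∧ y a ≠ z a).card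

/-- The symbol of a three-card hand `{x, y, z}`: the number of all-common attributes,
together with the (unordered) multiset of the three pair-counts. -/
def symbol (x y z : Card) : ℕ × Multiset ℕ :=
  (tCount x y z, {pairCount x y z, pairCount y z x, pairCount z x y})

theorem pc_symm (x y z : Card) : pairCount x y z = pairCount y x z := by
  unfold pairCount
  congr 1
  ext a
  simp only [Finset.mem_filter, Finset.mem_univ, true_and]
  grind

theorem tc_rot (x y z : Card) : tCount x y z = tCount y z x := by
  unfold tCount
  congr 1
  ext a
  simp only [Finset.mem_filter, Finset.mem_univ, true_and]
  grind

theorem tc_swap (x y z : Card) : tCount x y z = tCount y x z := by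
  unfold tCount
  congr 1
  ext a
  simp only [Finset.mem_filter, Finset.mem_univ, true_and]
  grind

theorem pc_self (x z : Card) : tCount x x z + pairCount x x z = 4 := by
  unfold tCount pairCount
  have := Finset.card_filter_add_card_filter_not (s := (Finset.univ : Finset (Fin 4)))
    (fun a => x a = z a)
  simpa using this

/-- Canonically ordered triples. -/
def Good (x y z : Card) : Prop :=
  tCount x y z = 1 ∧ pairCount x y z = 0 ∧ pairCount y z x = 1 ∧ pairCount z x y = 2

instance (x y z : Card) : Decidable (Good x y z) := by unfold Good; infer_instance

theorem Good.distinct {x y z : Card} (h : Good x y z) : x ≠ y ∧ x ≠ z ∧ y ≠ z := by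
  obtain ⟨h1, h2, h3, h4⟩ := h
  refine ⟨?_, ?_, ?_⟩
  · rintro rfl
    have := pc_self x z
    omega
  · rintro rfl
    have := pc_self x y
    rw [tc_rot, tc_rot] at h1
    rw [← tc_rot] at h1
    have h5 := tc_rot x x y
    have h6 := tc_rot x y x
    omega
  · rintro rfl
    have := pc_self y x
    have h5 := tc_rot x y y
    omega

theorem multi {a b c : ℕ} (h : ({a, b, c} : Multiset ℕ) = {0, 1, 2}) :
    (a = 0 ∧ b = 1 ∧ c = 2) ∨ (a = 0 ∧ b = 2 ∧ c = 1) ∨ (a = 1 ∧ b = 0 ∧ c = 2) ∨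
    (a = 1 ∧ b = 2 ∧ c = 0) ∨ (a = 2 ∧ b = 0 ∧ c = 1) ∨ (a = 2 ∧ b = 1 ∧ c = 0) := by
  have ha : a ∈ ({0, 1, 2} : Multiset ℕ) := by rw [← h]; simp
  have hb : b ∈ ({0, 1, 2} : Multiset ℕ) := by rw [← h]; simp
  have hc : c ∈ ({0, 1, 2} : Multiset ℕ) := by rw [← h]; simp
  simp only [Multiset.insert_eq_cons, Multiset.mem_cons, Multiset.mem_singleton] at ha hb hc
  rcases ha with rfl | rfl | rfl <;> rcases hb with rfl | rfl | rfl <;>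
    rcases hc with rfl | rfl | rfl <;> first | (revert h; decide) | simp

theorem exists_good {x y z : Card} (h : symbol x y z = (1, ({0, 1, 2} : Multiset ℕ))) :
    ∃ x' y' z', ({x, y, z} : Finset Card) = {x', y', z'} ∧ Good x' y' z' := by
  unfold symbol at h
  rw [Prod.mk.injEq] at h
  obtain ⟨ht, hm⟩ := h
  have e1 := tc_rot x y z
  have e2 := tc_rot y z x
  have e3 := tc_swap x y z
  have e4 := tc_rot y x z
  have e5 := tc_rot x z y
  have s1 := pc_symm x y z
  have s2 := pc_symm y z x
  have s3 := pc_symm z x y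
  unfold Good
  rcases multi hm with h | h | h | h | h | h
  · exact ⟨x, y, z, rfl, by omega⟩
  · exact ⟨y, x, z, by ext; simp; tauto, by omega⟩
  · exact ⟨z, y, x, by ext; simp; tauto, by omega⟩
  · exact ⟨z, x, y, by ext; simp; tauto, by omega⟩
  · exact ⟨y, z, x, by ext; simp; tauto, by omega⟩
  · exact ⟨x, z, y, by ext; simp; tauto, by omega⟩

theorem good_inj {x y z x' y' z' : Card} (h : Good x y z) (h' : Good x' y' z')
    (e : ({x, y, z} : Finset Card) = {x', y', z'}) : x = x' ∧ y = y' ∧ z = z' := by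
  have d := h'.distinct
  have hx : x' ∈ ({x, y, z} : Finset Card) := by rw [e]; simp
  have hy : y' ∈ ({x, y, z} : Finset Card) := by rw [e]; simp
  have hz : z' ∈ ({x, y, z} : Finset Card) := by rw [e]; simp
  clear e
  simp only [Finset.mem_insert, Finset.mem_singleton] at hx hy hz
  have s1 := pc_symm x y z
  have s2 := pc_symm y z x
  have s3 := pc_symm z x y
  unfold Good at h h'
  rcases hx with rfl | rfl | rfl <;> rcases hy with rfl | rfl | rfl <;>
    rcases hz with rfl | rfl | rfl <;>
    first
    | exact ⟨rfl, rfl, rfl⟩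
    | exact absurd rfl d.1
    | exact absurd rfl d.2.1
    | exact absurd rfl d.2.2
    | (exfalso; omega)

/-- Type of the values of one attribute. -/
def ty (p : Fin 3 × Fin 3 × Fin 3) : Fin 5 :=
  if p.1 = p.2.1 then (if p.2.1 = p.2.2 then 0 else 1)
  else if p.2.1 = p.2.2 then 2 else if p.2.2 = p.1 then 3 else 4

def PT (τ : Fin 4 → Fin 5) : Prop :=
  (Finset.univ.filter fun a => τ a = 0).card = 1 ∧
  (Finset.univ.filter fun a => τ a = 1).card = 0 ∧
  (Finset.univ.filter fun a => τ a = 2).card = 1 ∧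
  (Finset.univ.filter fun a => τ a = 3).card = 2

instance : DecidablePred PT := fun τ => by unfold PT; infer_instance

theorem ty0 : ∀ a b c : Fin 3, ty (a, b, c) = 0 ↔ a = b ∧ b = c := by decide
theorem ty1 : ∀ a b c : Fin 3, ty (a, b, c) = 1 ↔ a = b ∧ b ≠ c := by decide
theorem ty2 : ∀ a b c : Fin 3, ty (a, b, c) = 2 ↔ b = c ∧ c ≠ a := by decide
theorem ty3 : ∀ a b c : Fin 3, ty (a, b, c) = 3 ↔ c = a ∧ a ≠ b := by decide

theorem good_iff (x y z : Card) : Good x y z ↔ PT (fun a => ty (x a, y a, z a)) := by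
  unfold Good PT tCount pairCount
  simp only [ty0, ty1, ty2, ty3]

def wt (i : Fin 5) : ℕ := (Finset.univ.filter fun p => ty p = i).card

theorem wt_eq : ∀ i, wt i = if i = 0 then 3 else 6 := by decide +kernel

theorem sum_wt : ∑ τ ∈ (Finset.univ.filter PT), ∏ a, (if τ a = 0 then 3 else 6) = 7776 := by
  decide +kernel

theorem card_fun : (Finset.univ.filter
    fun g : Fin 4 → Fin 3 × Fin 3 × Fin 3 => PT (fun a => ty (g a))).card = 7776 := by
  rw [← sum_wt, Finset.card_eq_sum_card_fiberwise
    (f := fun (g : Fin 4 → Fin 3 × Fin 3 × Fin 3) a => ty (g a)) (t := Finset.univ.filter PT)]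
  · refine Finset.sum_congr rfl fun τ hτ => ?_
    have : (Finset.univ.filter
        fun g : Fin 4 → Fin 3 × Fin 3 × Fin 3 => PT (fun a => ty (g a))).filter
          (fun g => (fun a => ty (g a)) = τ)
        = Fintype.piFinset (fun a => Finset.univ.filter fun p => ty p = τ a) := by
      ext g
      simp only [Finset.mem_filter, Finset.mem_univ, true_and, Fintype.mem_piFinset] at hτ ⊢
      constructor
      · rintro ⟨_, rfl⟩ a
        rfl
      · intro h
        have : (fun a => ty (g a)) = τ := funext h
        exact ⟨this ▸ hτ, this⟩
    rw [this, Fintype.card_piFinset]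
    exact Finset.prod_congr rfl fun a _ => wt_eq (τ a)
  · intro g hg
    simpa using hg

/-- There are exactly 7776 three-card hands with symbol `(1, {0, 1, 2})`. -/
theorem card_hands_symbol_1_012 :
    (((Finset.univ : Finset Card).powersetCard 3).filter
      fun s => ∃ x y z : Card, x ≠ y ∧ x ≠ z ∧ y ≠ z ∧ s = {x, y, z} ∧
        symbol x y z = (1, ({0, 1, 2} : Multiset ℕ))).card = 7776 := by
  rw [← card_fun]
  symm
  refine Finset.card_bij (fun g _ => {fun a => (g a).1, fun a => (g a).2.1, fun a => (g a).2.2})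
    ?_ ?_ ?_
  · intro g hg
    have hG : Good (fun a => (g a).1) (fun a => (g a).2.1) (fun a => (g a).2.2) := by
      rw [good_iff]
      simpa using hg
    obtain ⟨d1, d2, d3⟩ := hG.distinct
    rw [Finset.mem_filter, Finset.mem_powersetCard]
    refine ⟨⟨Finset.subset_univ _, Finset.card_eq_three.2 ⟨_, _, _, d1, d2, d3, rfl⟩⟩,
      _, _, _, d1, d2, d3, rfl, ?_⟩
    obtain ⟨h1, h2, h3, h4⟩ := hG
    unfold symbol
    rw [h1, h2, h3, h4]
  · intro g hg g' hg' e
    have hG : Good (fun a => (g a).1) (fun a => (g a).2.1) (fun a => (g a).2.2) := by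
      rw [good_iff]
      simpa using hg
    have hG' : Good (fun a => (g' a).1) (fun a => (g' a).2.1) (fun a => (g' a).2.2) := by
      rw [good_iff]
      simpa using hg'
    obtain ⟨e1, e2, e3⟩ := good_inj hG hG' e
    funext a
    exact Prod.ext (congrFun e1 a) (Prod.ext (congrFun e2 a) (congrFun e3 a))
  · intro s hs
    obtain ⟨x, y, z, -, -, -, rfl, h⟩ := (Finset.mem_filter.1 hs).2
    obtain ⟨x', y', z', e, hG⟩ := exists_good h
    refine ⟨fun a => (x' a, y' a, z' a), ?_, e.symm⟩
    rw [good_iff] at hG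
    simpa using hG
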